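/- Let n ≥ 1 and v ∈ 𝔖_{n+1}, and let S_p(v) = {v(n+2−p),…,v(n+1)} for 1 ≤ p ≤ n be the associated maximal chain. For x ∈ ℝⁿ write x̃_s = x_s for 1 ≤ s ≤ n and x̃_{n+1} = 0. Then the cone of nonnegative real combinations of u_{S_1(v)}, u_{S_2(v)}, …, u_{S_n(v)} equals the set {x ∈ ℝⁿ : x̃_{v(1)} ≤ x̃_{v(2)} ≤ ⋯ ≤ x̃_{v(n+1)}}; that is, each maximal cone of the permutohedral fan is a closed Weyl chamber of type Aₙ. -/

import Mathlib

/-- The standard basis vector `e_s` of `ℤⁿ` for `s ∈ [n+1]`, with the convention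
that the vector corresponding to the last element `n+1` is zero. -/
def permEps (n : ℕ) (s : Fin (n + 1)) : Fin n → ℤ :=
  fun i => if (i : ℕ) = (s : ℕ) then 1 else 0

/-- The ray generator `u_S` of the permutohedral fan, for `∅ ⊊ S ⊊ [n+1]`. -/
def permU (n : ℕ) (S : Finset (Fin (n + 1))) : Fin n → ℤ :=
  if Fin.last n ∈ S then -∑ s ∈ Sᶜ, permEps n s else ∑ s ∈ S, permEps n s

/-- The maximal chain associated to a permutation `v ∈ 𝔖_{n+1}`:
`S_p(v) = {v(n+2−p), …, v(n+1)}` (1-indexed); here `p : Fin n` (0-indexed)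
corresponds to the subset of size `p+1`. -/
def chainOfPerm (n : ℕ) (v : Equiv.Perm (Fin (n + 1))) : Fin n → Finset (Fin (n + 1)) :=
  fun p => (Finset.univ.filter (fun i : Fin (n + 1) => n - (p : ℕ) ≤ (i : ℕ))).image v

/-- The extension `x̃` of `x ∈ ℝⁿ` to `[n+1]` coordinates: `x̃ₛ = xₛ` for
`1 ≤ s ≤ n` and `x̃_{n+1} = 0`. -/
def tild (n : ℕ) (x : Fin n → ℝ) (s : Fin (n + 1)) : ℝ :=
  if h : (s : ℕ) < n then x ⟨(s : ℕ), h⟩ else 0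

/-!
The rays `u_{S_1(v)}, …, u_{S_n(v)}` form the basis dual to the simple roots
`x ↦ x̃_{v(i+1)} - x̃_{v(i)}` of the chamber of `v`: up to an additive constant `ũ_S` is the
indicator function of `S`, and along `v` the indicator of `S_p(v)` jumps exactly once. Hence the
coefficients of `x` in the rays are the values of the simple roots at `x`, and they are all
nonnegative exactly when `x̃ ∘ v` is monotone.
-/

section

variable {n : ℕ}

theorem sum_permEps_apply (S : Finset (Fin (n + 1))) (i : Fin n) :
    (∑ s ∈ S, permEps n s) i = if i.castSucc ∈ S then 1 else 0 := by
  rw [Finset.sum_apply, ← Finset.sum_ite_eq S i.castSucc (fun _ => (1 : ℤ))]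
  simp only [permEps, Fin.ext_iff, Fin.val_castSucc]

theorem permU_apply (S : Finset (Fin (n + 1))) (i : Fin n) :
    permU n S i = (if i.castSucc ∈ S then 1 else 0) - (if Fin.last n ∈ S then 1 else 0) := by
  unfold permU
  split_ifs with _ hi hi <;> simp [-Finset.sum_apply, sum_permEps_apply, hi]

theorem apply_mem_chainOfPerm_iff (v : Equiv.Perm (Fin (n + 1))) (p : Fin n) (i : Fin (n + 1)) :
    v i ∈ chainOfPerm n v p ↔ p.rev.castSucc < i := by
  simp only [chainOfPerm, v.injective.mem_finset_image, Finset.mem_filter_univ, Fin.lt_def,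
    Fin.val_castSucc, Fin.val_rev]
  omega

theorem tild_castSucc (x : Fin n → ℝ) (i : Fin n) : tild n x i.castSucc = x i := by
  simp [tild]

theorem tild_last (x : Fin n → ℝ) : tild n x (Fin.last n) = 0 := by
  simp [tild]

theorem tild_add (x y : Fin n → ℝ) (s : Fin (n + 1)) :
    tild n (x + y) s = tild n x s + tild n y s := by
  cases s using Fin.lastCases <;> simp [tild_castSucc, tild_last]

theorem tild_smul (c : ℝ) (x : Fin n → ℝ) (s : Fin (n + 1)) :
    tild n (c • x) s = c * tild n x s := by
  cases s using Fin.lastCases <;> simp [tild_castSucc, tild_last]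

theorem tild_permU (S : Finset (Fin (n + 1))) (s : Fin (n + 1)) :
    tild n (fun i => (permU n S i : ℝ)) s =
      (if s ∈ S then 1 else 0) - (if Fin.last n ∈ S then 1 else 0) := by
  cases s using Fin.lastCases <;> simp [tild_castSucc, tild_last, permU_apply]

/-- The simple roots of the Weyl chamber of `v`, as the coordinates of one linear map. They are
listed in reverse, the `p`-th being `x̃_{v(n+2-p)} - x̃_{v(n+1-p)}` for `1 ≤ p ≤ n` (1-indexed),
so that the `p`-th root is the one that does not vanish on `u_{S_p(v)}`. -/
def simpleRoots (v : Equiv.Perm (Fin (n + 1))) : (Fin n → ℝ) →ₗ[ℝ] (Fin n → ℝ) where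
  toFun x p := tild n x (v p.rev.succ) - tild n x (v p.rev.castSucc)
  map_add' x y := by
    ext p
    simp only [tild_add, Pi.add_apply]
    ring
  map_smul' c x := by
    ext p
    simp only [tild_smul, Pi.smul_apply, smul_eq_mul, RingHom.id_apply]
    ring

theorem simpleRoots_apply (v : Equiv.Perm (Fin (n + 1))) (x : Fin n → ℝ) (p : Fin n) :
    simpleRoots v x p = tild n x (v p.rev.succ) - tild n x (v p.rev.castSucc) :=
  rfl

theorem simpleRoots_nonneg_iff_monotone (v : Equiv.Perm (Fin (n + 1))) (x : Fin n → ℝ) :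
    (∀ p, 0 ≤ simpleRoots v x p) ↔ Monotone (tild n x ∘ v) := by
  simp only [simpleRoots_apply, sub_nonneg, Fin.monotone_iff_le_succ, Function.comp_apply]
  exact Fin.revPerm.forall_congr fun _ => Iff.rfl

theorem simpleRoots_injective (v : Equiv.Perm (Fin (n + 1))) :
    Function.Injective (simpleRoots v) := by
  rw [injective_iff_map_eq_zero]
  intro x hx
  have step (q : Fin n) : tild n x (v q.succ) = tild n x (v q.castSucc) := by
    simpa [simpleRoots_apply, sub_eq_zero] using congrFun hx q.rev
  have const (i : Fin (n + 1)) : tild n x (v i) = tild n x (v 0) := by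
    induction i using Fin.induction with
    | zero => rfl
    | succ q ih => rw [step, ih]
  ext i
  calc x i = tild n x (v (v.symm i.castSucc)) := by rw [v.apply_symm_apply, tild_castSucc]
    _ = tild n x (v (v.symm (Fin.last n))) := by rw [const, const (v.symm _)]
    _ = 0 := by rw [v.apply_symm_apply, tild_last]

theorem simpleRoots_permU_chainOfPerm (v : Equiv.Perm (Fin (n + 1))) (p : Fin n) :
    simpleRoots v (fun i => (permU n (chainOfPerm n v p) i : ℝ)) = Pi.single p 1 := by
  ext q
  simp only [simpleRoots_apply, tild_permU, apply_mem_chainOfPerm_iff, sub_sub_sub_cancel_right,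
    Fin.castSucc_lt_succ_iff, Fin.castSucc_lt_castSucc_iff, Fin.rev_le_rev, Fin.rev_lt_rev]
  rcases lt_trichotomy q p with h | rfl | h
  · simp [h, h.le, h.ne]
  · simp
  · simp [h.not_ge, h.not_gt, h.ne']

theorem eq_sum_permU_chainOfPerm_iff (v : Equiv.Perm (Fin (n + 1))) (x a : Fin n → ℝ) :
    (∀ i, x i = ∑ p, a p * (permU n (chainOfPerm n v p) i : ℝ)) ↔ simpleRoots v x = a := by
  have roots_sum :
      simpleRoots v (∑ p, a p • fun i => (permU n (chainOfPerm n v p) i : ℝ)) = a := by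
    simp only [map_sum, map_smul, simpleRoots_permU_chainOfPerm]
    exact (pi_eq_sum_univ' a).symm
  rw [(simpleRoots_injective v).eq_iff' roots_sum, funext_iff]
  simp only [Finset.sum_apply, Pi.smul_apply, smul_eq_mul]

end

/-- Each maximal cone of the permutohedral fan is a closed Weyl chamber of type `Aₙ`:
for `v ∈ 𝔖_{n+1}`, the cone of nonnegative combinations of
`u_{S_1(v)}, …, u_{S_n(v)}` equals `{x ∈ ℝⁿ : x̃_{v(1)} ≤ ⋯ ≤ x̃_{v(n+1)}}`. -/
theorem cone_of_chainOfPerm_eq_weyl_chamber (n : ℕ) (hn : 1 ≤ n)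
    (v : Equiv.Perm (Fin (n + 1))) :
    {x : Fin n → ℝ | ∃ a : Fin n → ℝ, (∀ p, 0 ≤ a p) ∧
        ∀ i, x i = ∑ p, a p * (permU n (chainOfPerm n v p) i : ℝ)} =
      {x : Fin n → ℝ | ∀ i j : Fin (n + 1), i ≤ j → tild n x (v i) ≤ tild n x (v j)} := by
  ext x
  calc (∃ a : Fin n → ℝ, (∀ p, 0 ≤ a p) ∧
        ∀ i, x i = ∑ p, a p * (permU n (chainOfPerm n v p) i : ℝ))
      ↔ ∃ a : Fin n → ℝ, (∀ p, 0 ≤ a p) ∧ simpleRoots v x = a := by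
        simp only [eq_sum_permU_chainOfPerm_iff]
    _ ↔ ∀ p, 0 ≤ simpleRoots v x p := exists_eq_right'
    _ ↔ Monotone (tild n x ∘ v) := simpleRoots_nonneg_iff_monotone v x
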